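/- Let f be a meromorphic function on ℂ such that f(0) ≠ 0, ∞, and let c ∈ ℂ. Then for all α > 1, all δ with 0 < δ < 1, and all r ≥ 1, one has m(r, f(z+c)/f(z)) ≤ [ (8|c|(3α+1) + 8α(α−1)|c|^δ) / (δ(1−δ)(α−1)² r^δ) ] · ( T(α(r+|c|), f) + log⁺(1/|f(0)|) ). -/

import Mathlib

open MeasureTheory Filter Topology Metric

noncomputable section

/-- Positive part of the logarithm: `log⁺ x = max (log x) 0`. -/
def logPlus (x : ℝ) : ℝ := max (Real.log x) 0

/-- The point `r e^{iθ}` on the circle of radius `r`. -/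
def circ (r θ : ℝ) : ℂ := (r : ℂ) * Complex.exp (θ * Complex.I)

/-- Nevanlinna proximity function `m(r, f)`. -/
def nevm (f : ℂ → ℂ) (r : ℝ) : ℝ :=
  (2 * Real.pi)⁻¹ * ∫ θ in (0:ℝ)..(2 * Real.pi), logPlus ‖f (circ r θ)‖

/-- Order of the pole of `f` at `x` (`0` if `f` extends analytically over `x`);
determined through the punctured neighbourhood of `x`. -/
def poleOrd (f : ℂ → ℂ) (x : ℂ) : ℕ :=
  sInf {n : ℕ | ∃ g : ℂ → ℂ, AnalyticAt ℂ g x ∧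
    ∀ᶠ w in 𝓝[≠] x, (w - x) ^ n * f w = g w}

/-- Unintegrated counting function `n(r, f)`: number of poles of `f` in `|z| ≤ r`,
counted with multiplicity. -/
def nevn (f : ℂ → ℂ) (r : ℝ) : ℕ := ∑ᶠ z ∈ closedBall (0:ℂ) r, poleOrd f z

/-- Integrated counting function `N(r, f)`. -/
def nevN (f : ℂ → ℂ) (r : ℝ) : ℝ :=
  (∫ t in (0:ℝ)..r, ((nevn f t : ℝ) - (nevn f 0 : ℝ)) / t) + (nevn f 0 : ℝ) * Real.log r

/-- Nevanlinna characteristic `T(r, f) = m(r, f) + N(r, f)`. -/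
def nevT (f : ℂ → ℂ) (r : ℝ) : ℝ := nevm f r + nevN f r

/-- A subset of `(0, ∞)` has finite logarithmic measure: `∫_E dr/r < ∞`. -/
def FinLogMeasure (E : Set ℝ) : Prop :=
  E ⊆ Set.Ioi 0 ∧ ∫⁻ r in E, ENNReal.ofReal r⁻¹ < ⊤

/-- `f` is a non-constant function. -/
def Nonconstant (f : ℂ → ℂ) : Prop := ¬ ∃ a : ℂ, ∀ z : ℂ, f z = a

/-- `f` has finite order: `limsup_{r→∞} log T(r,f) / log r < ∞`. -/
def FiniteOrder (f : ℂ → ℂ) : Prop :=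
  IsBoundedUnder (· ≤ ·) atTop fun r : ℝ => Real.log (nevT f r) / Real.log r

end

/-! Write `K = T(R, f) + log⁺ (1 / |f 0|)` with `R = α (r + |c|)`, and let `s` be the midpoint of
`r + |c|` and `R`. For `|z| = r`, subtracting the Poisson–Jensen formulas on `|ζ| < s` at `z + c`
and at `z` expresses `log |f (z + c) / f z|` through two differences.

* The difference of the Poisson kernels is `O(|c|)` uniformly on `|ζ| = s`, and the mean of
  `|log |f||` over that circle is `m(s, f) + m(s, 1/f) ≤ 2 K` by the first main theorem.
* Each zero or pole `i` contributes a difference of logarithms of canonical factors. Its smooth part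
  is `O(|c|)`; its singular part is at most
  `|c|^δ / δ * (|z + c - i|^(-δ) + |z - i|^(-δ))`, because `log (1 + x) ≤ x^δ / δ`.
  The mean of `|z - a|^(-δ)` over `|z| = r` is at most `1 / ((1 - δ) r^δ)` for every `a`, and the
  number of zeros and poles in `|z| ≤ s` is at most `2 R / (R - s) * K` by the first main theorem,
  since each of them adds at least `log (R / s) ≥ 1 - s / R` to `N(R, f) + N(R, 1/f)`.
-/

lemma intervalIntegrable_indicator_Ici_inv {a R : ℝ} (ha : 0 < a) (hR : 0 ≤ R) :
    IntervalIntegrable ((Set.Ici a).indicator Inv.inv) volume 0 R := by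
  rw [intervalIntegrable_iff_integrableOn_Ioc_of_le hR, IntegrableOn,
    integrable_indicator_iff measurableSet_Ici, IntegrableOn,
    Measure.restrict_restrict measurableSet_Ici]
  refine (continuousOn_inv₀.mono fun t ht ↦ ?_).integrableOn_Icc.mono_set
    (fun t ht ↦ ⟨ht.1, ht.2.2⟩ : Set.Ici a ∩ Set.Ioc 0 R ⊆ Set.Icc a R)
  exact (ha.trans_le ht.1).ne'

lemma integral_indicator_Ici_inv {a R : ℝ} (ha : 0 < a) (haR : a ≤ R) :
    ∫ t in (0 : ℝ)..R, (Set.Ici a).indicator Inv.inv t = Real.log (R * a⁻¹) := by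
  have hinter : Set.Ioc 0 R ∩ Set.Ici a = Set.Icc a R := by
    ext t
    exact ⟨fun ht ↦ ⟨ht.2, ht.1.2⟩, fun ht ↦ ⟨⟨ha.trans_le ht.1, ht.2⟩, ht.1⟩⟩
  rw [intervalIntegral.integral_of_le (ha.le.trans haR), setIntegral_indicator measurableSet_Ici,
    hinter, integral_Icc_eq_integral_Ioc, ← intervalIntegral.integral_of_le haR,
    ← div_eq_mul_inv, ← integral_inv_of_pos ha (ha.trans_le haR)]

lemma integral_step_sub_step_div {a R : ℝ} (ha : 0 ≤ a) (haR : a ≤ R) :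
    IntervalIntegrable
        (fun t ↦ ((if a ≤ t then 1 else 0) - (if a ≤ 0 then 1 else 0)) / t) volume 0 R ∧
      ∫ t in (0 : ℝ)..R, ((if a ≤ t then 1 else 0) - (if a ≤ 0 then 1 else 0)) / t =
        Real.log (R * a⁻¹) := by
  rcases ha.eq_or_lt with rfl | ha
  · have hzero : Set.EqOn
        (fun t : ℝ ↦ ((if 0 ≤ t then 1 else 0) - (if (0 : ℝ) ≤ 0 then 1 else 0)) / t)
        (fun _ ↦ 0) (Set.uIcc 0 R) := by
      intro t ht
      rw [Set.uIcc_of_le haR] at ht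
      simp [ht.1]
    refine ⟨intervalIntegrable_const.congr fun t ht ↦ (hzero (Set.uIoc_subset_uIcc ht)).symm, ?_⟩
    rw [intervalIntegral.integral_congr hzero]
    simp
  · have hind : (fun t : ℝ ↦ ((if a ≤ t then 1 else 0) - (if a ≤ 0 then 1 else 0)) / t) =
        (Set.Ici a).indicator Inv.inv := by
      ext t
      simp [Set.indicator_apply, ha.not_ge, ite_div]
    rw [hind]
    exact ⟨intervalIntegrable_indicator_Ici_inv ha (ha.le.trans haR),
      integral_indicator_Ici_inv ha haR⟩

section Divisors

open Function

variable {E : Type*} [NormedAddCommGroup E]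

/-- The number of points of `D` in the closed ball `‖z‖ ≤ t`, counted with multiplicity; for the
divisor of the poles of `f` this is the unintegrated counting function `n(t, f)`. -/
noncomputable def ballCount (D : locallyFinsupp E ℤ) (t : ℝ) : ℤ := ∑ᶠ z ∈ closedBall (0 : E) t, D z

lemma ballCount_zero (D : locallyFinsupp E ℤ) : ballCount D 0 = D 0 := by
  rw [ballCount, closedBall_zero, finsum_mem_singleton]

lemma locallyFinsupp_abs_apply (D : locallyFinsupp E ℤ) (z : E) : |D| z = |D z| := by
  rw [← posPart_add_negPart, ← posPart_add_negPart, locallyFinsuppWithin.coe_add, Pi.add_apply,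
    locallyFinsuppWithin.posPart_apply, locallyFinsuppWithin.negPart_apply]

variable [ProperSpace E] (D : locallyFinsupp E ℤ) {R t : ℝ}

/-- The finite set of points with `‖z‖ ≤ R` at which `D` is nonzero, over which the finitary sums
in `ballCount` and `logCounting` can be evaluated. -/
noncomputable def closedBallSupport (R : ℝ) : Finset E :=
  ((locallyFinsuppWithin.finiteSupport (D.restrict (Set.subset_univ (closedBall 0 R))))
    (isCompact_closedBall 0 R)).toFinset

variable {D} in
lemma mem_closedBallSupport {z : E} : z ∈ closedBallSupport D R ↔ ‖z‖ ≤ R ∧ D z ≠ 0 := by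
  simp [closedBallSupport, locallyFinsuppWithin.restrict_apply]

lemma ballCount_eq_sum (htR : t ≤ R) :
    ballCount D t = ∑ z ∈ closedBallSupport D R, if ‖z‖ ≤ t then D z else 0 := by
  classical
  simp only [ballCount, finsum_eq_if, mem_closedBall_zero_iff]
  refine finsum_eq_sum_of_support_subset _ fun z hz ↦ ?_
  obtain ⟨hzt, hzD⟩ : ‖z‖ ≤ t ∧ D z ≠ 0 := by simpa using hz
  exact mem_closedBallSupport.2 ⟨hzt.trans htR, hzD⟩

lemma ballCount_abs_eq_sum (t : ℝ) :
    ballCount |D| t = ∑ z ∈ closedBallSupport D t, |D z| := by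
  have hsupp : closedBallSupport |D| t = closedBallSupport D t := by
    ext z
    simp [mem_closedBallSupport, locallyFinsupp_abs_apply]
  rw [ballCount_eq_sum |D| le_rfl, hsupp]
  exact Finset.sum_congr rfl fun z hz ↦ by
    rw [if_pos (mem_closedBallSupport.1 hz).1, locallyFinsupp_abs_apply]

lemma logCounting_eq_sum (hR : 0 ≤ R) :
    D.logCounting R = ∑ z ∈ closedBallSupport D R, D z * Real.log (R * ‖z‖⁻¹) +
      D 0 * Real.log R := by
  have hball (z : E) (hz : ‖z‖ ≤ R) : D.toClosedBall R z = D z :=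
    locallyFinsuppWithin.toClosedBall_eval_within D (by simpa [abs_of_nonneg hR] using hz)
  simp only [locallyFinsuppWithin.logCounting, AddMonoidHom.coe_mk, ZeroHom.coe_mk]
  rw [finsum_eq_sum_of_support_subset (s := closedBallSupport D R)]
  · congr 1
    exact Finset.sum_congr rfl fun z hz ↦ by rw [hball z (mem_closedBallSupport.1 hz).1]
  · intro z hz
    have hz' : D.toClosedBall R z ≠ 0 := by
      simp only [mem_support, ne_eq, mul_eq_zero, not_or, Int.cast_eq_zero] at hz
      exact hz.1
    have hzR : ‖z‖ ≤ R := by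
      simpa [abs_of_nonneg hR] using
        locallyFinsuppWithin.toClosedBall_support_subset_closedBall (r := R) D hz'
    exact mem_closedBallSupport.2 ⟨hzR, hball z hzR ▸ hz'⟩

theorem integral_ballCount_div_add_eq_logCounting (hR : 0 ≤ R) :
    (∫ t in (0 : ℝ)..R, ((ballCount D t : ℝ) - ballCount D 0) / t) + ballCount D 0 * Real.log R =
      D.logCounting R := by
  have hsum : Set.EqOn (fun t ↦ ((ballCount D t : ℝ) - ballCount D 0) / t)
      (fun t ↦ ∑ z ∈ closedBallSupport D R,
        D z * (((if ‖z‖ ≤ t then 1 else 0) - (if ‖z‖ ≤ 0 then 1 else 0)) / t)) (Set.uIcc 0 R) := by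
    intro t ht
    rw [Set.uIcc_of_le hR] at ht
    simp only [ballCount_eq_sum D ht.2, ballCount_eq_sum D hR, Int.cast_sum,
      ← Finset.sum_sub_distrib, Finset.sum_div]
    refine Finset.sum_congr rfl fun z _ ↦ ?_
    split_ifs <;> push_cast <;> ring
  have hstep (z) (hz : z ∈ closedBallSupport D R) :=
    integral_step_sub_step_div (norm_nonneg z) (mem_closedBallSupport.1 hz).1
  rw [intervalIntegral.integral_congr hsum,
    intervalIntegral.integral_finsetSum fun z hz ↦ (hstep z hz).1.const_mul _,
    logCounting_eq_sum D hR, ballCount_zero]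
  congr 1
  exact Finset.sum_congr rfl fun z hz ↦ by
    rw [intervalIntegral.integral_const_mul, (hstep z hz).2]

lemma ballCount_mul_one_sub_div_le_logCounting (hD : 0 ≤ D) (hD0 : D 0 = 0) (ht : 0 ≤ t)
    (htR : t < R) : ballCount D t * (1 - t / R) ≤ D.logCounting R := by
  have hR : 0 < R := ht.trans_lt htR
  rw [logCounting_eq_sum D hR.le, ballCount_eq_sum D htR.le, hD0, Int.cast_zero, zero_mul, add_zero,
    Int.cast_sum, Finset.sum_mul]
  refine Finset.sum_le_sum fun z hz ↦ ?_
  obtain ⟨hzR, hzD⟩ := mem_closedBallSupport.1 hz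
  have hz0 : 0 < ‖z‖ := norm_pos_iff.2 fun h ↦ hzD (h ▸ hD0)
  have hDz : (0 : ℝ) ≤ D z := mod_cast hD z
  split_ifs with hzt
  · gcongr
    calc 1 - t / R ≤ 1 - ‖z‖ / R := by gcongr
      _ = 1 - (R * ‖z‖⁻¹)⁻¹ := by rw [mul_inv, inv_inv, mul_comm, div_eq_mul_inv]
      _ ≤ Real.log (R * ‖z‖⁻¹) := Real.one_sub_inv_le_log_of_pos (by positivity)
  · rw [Int.cast_zero, zero_mul]
    exact mul_nonneg hDz (Real.log_nonneg (by rwa [← div_eq_mul_inv, one_le_div hz0]))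

end Divisors

section Dictionary

open Function MeromorphicOn ValueDistribution

lemma nevm_eq_proximity (f : ℂ → ℂ) (r : ℝ) : nevm f r = proximity f ⊤ r := by
  simp [nevm, proximity_top, Real.circleAverage, logPlus, circ, circleMap, Real.posLog_def,
    max_comm]

lemma exists_analyticAt_eventuallyEq_iff {f : ℂ → ℂ} {x : ℂ} (hf : MeromorphicAt f x) :
    (∃ g, AnalyticAt ℂ g x ∧ ∀ᶠ w in 𝓝[≠] x, f w = g w) ↔ 0 ≤ meromorphicOrderAt f x := by
  refine ⟨fun ⟨g, hg, hfg⟩ ↦ meromorphicOrderAt_congr hfg ▸ hg.meromorphicOrderAt_nonneg,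
    fun h ↦ ⟨toMeromorphicNFAt f x, ?_, hf.eq_nhdsNE_toMeromorphicNFAt⟩⟩
  rwa [← meromorphicNFAt_toMeromorphicNFAt.meromorphicOrderAt_nonneg_iff_analyticAt,
    ← meromorphicOrderAt_congr hf.eq_nhdsNE_toMeromorphicNFAt]

lemma meromorphicOrderAt_sub_pow_mul {f : ℂ → ℂ} {x : ℂ} (hf : MeromorphicAt f x) (n : ℕ) :
    meromorphicOrderAt (fun w ↦ (w - x) ^ n * f w) x = n + meromorphicOrderAt f x := by
  have hpow : meromorphicOrderAt (fun w ↦ (w - x) ^ n) x = ((n : ℤ) : WithTop ℤ) :=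
    (meromorphicOrderAt_eq_int_iff (by fun_prop)).2
      ⟨fun _ ↦ 1, analyticAt_const, one_ne_zero, by simp⟩
  have hmul := meromorphicOrderAt_mul (f := fun w ↦ (w - x) ^ n) (by fun_prop) hf
  rw [hpow] at hmul
  exact hmul

lemma poleOrd_eq_negPart {f : ℂ → ℂ} {x : ℂ} (hf : MeromorphicAt f x) :
    (poleOrd f x : ℤ) = (meromorphicOrderAt f x).untop₀⁻ := by
  have hset : {n : ℕ | ∃ g : ℂ → ℂ, AnalyticAt ℂ g x ∧ ∀ᶠ w in 𝓝[≠] x, (w - x) ^ n * f w = g w} =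
      {n : ℕ | 0 ≤ n + meromorphicOrderAt f x} := by
    ext n
    rw [Set.mem_ofPred_eq, exists_analyticAt_eventuallyEq_iff (f := fun w ↦ (w - x) ^ n * f w)
      (by fun_prop), meromorphicOrderAt_sub_pow_mul hf]
    rfl
  rw [poleOrd, hset]
  cases meromorphicOrderAt f x with
  | top => simp
  | coe m =>
    have hIci : {n : ℕ | 0 ≤ (n : WithTop ℤ) + m} = Set.Ici (-m).toNat := by
      ext n
      have : 0 ≤ (n : WithTop ℤ) + m ↔ 0 ≤ (n : ℤ) + m := by norm_cast
      simp only [Set.mem_ofPred_eq, this, Set.mem_Ici, Int.toNat_le]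
      lia
    rw [hIci, csInf_Ici, WithTop.untop₀_coe, Int.ofNat_toNat, negPart_def]

variable {f : ℂ → ℂ} {R : ℝ}

lemma natCast_finsum {ι : Sort*} {M : Type*} [AddCommMonoidWithOne M] [CharZero M] (g : ι → ℕ) :
    ((∑ᶠ i, g i : ℕ) : M) = ∑ᶠ i, (g i : M) :=
  (Nat.castAddMonoidHom M).map_finsum_of_injective Nat.cast_injective g

lemma nevn_eq_ballCount (hf : Meromorphic f) (t : ℝ) :
    (nevn f t : ℤ) = ballCount (divisor f Set.univ)⁻ t := by
  simp only [nevn, ballCount, natCast_finsum]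
  refine finsum_congr fun z ↦ finsum_congr fun _ ↦ ?_
  rw [poleOrd_eq_negPart (hf z), locallyFinsuppWithin.negPart_apply,
    divisor_apply hf.meromorphicOn (Set.mem_univ z)]

lemma nevN_eq_logCounting (hf : Meromorphic f) (hR : 0 ≤ R) : nevN f R = logCounting f ⊤ R := by
  have hcast (t : ℝ) : (nevn f t : ℝ) = ballCount (divisor f Set.univ)⁻ t :=
    mod_cast nevn_eq_ballCount hf t
  rw [logCounting_top, ← integral_ballCount_div_add_eq_logCounting _ hR, nevN]
  simp only [hcast]

lemma nevT_eq_characteristic (hf : Meromorphic f) (hR : 0 ≤ R) :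
    nevT f R = characteristic f ⊤ R := by
  rw [nevT, nevm_eq_proximity, nevN_eq_logCounting hf hR, characteristic, Pi.add_apply]

end Dictionary

section PoissonJensen

open Complex MeromorphicOn
open Real (circleAverage)

variable {f h : ℂ → ℂ} {s : ℝ} {w : ℂ}

lemma continuousOn_poissonKernel_sphere {c : ℂ} (hw : w ∈ ball c s) :
    ContinuousOn (poissonKernel c w) (sphere c |s|) := by
  rw [poissonKernel_eq_re_herglotzRieszKernel]
  exact continuous_re.comp_continuousOn (continuousOn_herglotzRieszKernel_sphere hw)

lemma circleIntegrable_poissonKernel_mul {c : ℂ} {u : ℂ → ℝ} (hu : CircleIntegrable u c s)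
    (hw : w ∈ ball c s) : CircleIntegrable (fun z ↦ poissonKernel c w z * u z) c s :=
  hu.continuousOn_smul (continuousOn_poissonKernel_sphere hw)

lemma circleAverage_poissonKernel_mul_log_norm_sub {v : ℂ} (hv : v ∈ sphere 0 s)
    (hw : w ∈ ball 0 s) :
    circleAverage (fun z ↦ poissonKernel 0 w z * Real.log ‖z - v‖) 0 s = Real.log ‖w - v‖ := by
  rw [poissonKernel_eq_re_herglotzRieszKernel]
  exact circleAverage_re_herglotzRieszKernel_mul_log hv hw

lemma circleAverage_poissonKernel_mul_log_norm {c : ℂ} (hh : AnalyticOnNhd ℂ h (closedBall c s))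
    (hh0 : ∀ z ∈ closedBall c s, h z ≠ 0) (hw : w ∈ ball c s) :
    circleAverage (fun z ↦ poissonKernel c w z * Real.log ‖h z‖) c s = Real.log ‖h w‖ :=
  InnerProductSpace.HarmonicOnNhd.circleAverage_poissonKernel_smul
    (f := fun z ↦ Real.log ‖h z‖) (fun z hz ↦ (hh z hz).harmonicAt_log_norm (hh0 z hz)) hw

lemma log_norm_eventuallyEq_codiscreteWithin_sphere (D : ECanonicalDecomp f h s) (hs : 0 < s)
    (hf : ∀ z ∈ closedBall 0 s, meromorphicOrderAt f z ≠ ⊤) :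
    (fun z ↦ Real.log ‖f z‖) =ᶠ[codiscreteWithin (sphere 0 s)]
      fun z ↦ Real.log ‖h z‖ + ∑ᶠ v, divisor f (sphere 0 s) v * Real.log ‖z - v‖ := by
  filter_upwards [codiscreteWithin_mono sphere_subset_closedBall
      D.meromorphicOn.analyticAt_mem_codiscreteWithin,
    codiscreteWithin_mono sphere_subset_closedBall
      (MeromorphicAt.MeromorphicOn.codiscreteWithin_setOfPred_ne_zero D.meromorphicOn hf),
    self_mem_codiscreteWithin (sphere 0 s)] with z (hfz : AnalyticAt ℂ f z) (hz0 : f z ≠ 0) hz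
  have hlog := D.log_norm_eq (sphere_subset_closedBall hz)
    (hfz.meromorphicNFAt.meromorphicOrderAt_eq_zero_iff.2 hz0) hs
  have hfactors : ∑ᶠ i, divisor f (ball 0 s) i * Real.log ‖canonicalFactor s i z‖ = 0 := by
    refine finsum_eq_zero_of_forall_eq_zero fun i ↦ ?_
    by_cases hi : i ∈ ball 0 s
    · rw [norm_canonicalFactor_eval_circle_eq_one hi hz, Real.log_one, mul_zero]
    · rw [Function.locallyFinsuppWithin.apply_eq_zero_of_notMem _ hi, Int.cast_zero, zero_mul]
  rw [hfz.meromorphicTrailingCoeffAt_of_ne_zero hz0, hfactors] at hlog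
  linarith

lemma circleAverage_poissonKernel_mul_finsum_log_norm_sub {d : ℂ → ℝ}
    (hd : (Function.support d).Finite) (hds : Function.support d ⊆ sphere 0 s)
    (hw : w ∈ ball 0 s) :
    CircleIntegrable (fun z ↦ poissonKernel 0 w z * ∑ᶠ v, d v * Real.log ‖z - v‖) 0 s ∧
      circleAverage (fun z ↦ poissonKernel 0 w z * ∑ᶠ v, d v * Real.log ‖z - v‖) 0 s =
        ∑ᶠ v, d v * Real.log ‖w - v‖ := by
  have hsum (z : ℂ) : ∑ᶠ v, d v * Real.log ‖z - v‖ = ∑ v ∈ hd.toFinset, d v * Real.log ‖z - v‖ :=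
    finsum_eq_sum_of_support_subset _ fun v hv ↦ by simpa using left_ne_zero_of_mul hv
  have hfun : (fun z ↦ poissonKernel 0 w z * ∑ᶠ v, d v * Real.log ‖z - v‖) =
      ∑ v ∈ hd.toFinset, d v • fun z ↦ poissonKernel 0 w z * Real.log ‖z - v‖ := by
    ext z
    simp only [hsum, Finset.sum_apply, Pi.smul_apply, smul_eq_mul, Finset.mul_sum]
    exact Finset.sum_congr rfl fun v _ ↦ mul_left_comm ..
  have hint (v) (_ : v ∈ hd.toFinset) :
      CircleIntegrable (d v • fun z ↦ poissonKernel 0 w z * Real.log ‖z - v‖) 0 s :=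
    (circleIntegrable_poissonKernel_mul (MeromorphicOn.circleIntegrable_log_norm
      (f := fun z ↦ z - v) fun z _ ↦ by fun_prop) hw).const_smul
  refine ⟨hfun ▸ CircleIntegrable.sum _ hint, ?_⟩
  rw [hfun, Real.circleAverage_sum hint, hsum]
  refine Finset.sum_congr rfl fun v hv ↦ ?_
  rw [Real.circleAverage_smul, smul_eq_mul, circleAverage_poissonKernel_mul_log_norm_sub
    (hds (by simpa using hv)) hw]

theorem poissonJensen_formula (hf : MeromorphicOn f (closedBall 0 s))
    (hf' : ∀ z ∈ closedBall 0 s, meromorphicOrderAt f z ≠ ⊤) (hw : w ∈ ball 0 s)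
    (hfw : meromorphicOrderAt f w = 0) :
    circleAverage (fun z ↦ poissonKernel 0 w z * Real.log ‖f z‖) 0 s =
      ∑ᶠ i, divisor f (ball 0 s) i * Real.log ‖canonicalFactor s i w‖ +
        Real.log ‖meromorphicTrailingCoeffAt f w‖ := by
  have hs : 0 < s := pos_of_mem_ball hw
  obtain ⟨h, D⟩ := hf.exists_ecanonicalDecomp fun u ↦ hf' u u.2
  have hlogf : (fun z ↦ poissonKernel 0 w z * Real.log ‖f z‖) =ᶠ[codiscreteWithin (sphere 0 |s|)]
      (fun z ↦ poissonKernel 0 w z * Real.log ‖h z‖) +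
        fun z ↦ poissonKernel 0 w z * ∑ᶠ v, divisor f (sphere 0 s) v * Real.log ‖z - v‖ := by
    rw [abs_of_pos hs]
    filter_upwards [log_norm_eventuallyEq_codiscreteWithin_sphere D hs hf'] with z hz
    rw [hz, mul_add, Pi.add_apply]
  have hh : CircleIntegrable (fun z ↦ poissonKernel 0 w z * Real.log ‖h z‖) 0 s :=
    circleIntegrable_poissonKernel_mul (MeromorphicOn.circleIntegrable_log_norm fun z hz ↦
      (D.analyticOnNhd z (sphere_subset_closedBall (by rwa [abs_of_pos hs] at hz))).meromorphicAt)
      hw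
  obtain ⟨hsph, hsph'⟩ := circleAverage_poissonKernel_mul_finsum_log_norm_sub
    (d := fun v ↦ divisor f (sphere 0 s) v)
    ((divisor f (sphere 0 s)).finiteSupport (isCompact_sphere 0 s) |>.subset fun v ↦ by simp)
    (fun v hv ↦ (divisor f (sphere 0 s)).supportWithinDomain (by simpa using hv)) hw
  rw [Real.circleAverage_congr_codiscreteWithin hlogf hs.ne', Real.circleAverage_add hh hsph, hsph',
    circleAverage_poissonKernel_mul_log_norm D.analyticOnNhd D.ne_zero hw,
    D.log_norm_eq (ball_subset_closedBall hw) hfw hs]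
  ring

end PoissonJensen

section LogNorm

variable {E : Type*} [NormedAddCommGroup E] {a b : E} {δ : ℝ}

lemma log_one_add_le_rpow_div {x : ℝ} (hx : 0 ≤ x) (hδ0 : 0 < δ) (hδ1 : δ ≤ 1) :
    Real.log (1 + x) ≤ x ^ δ / δ := by
  rw [le_div_iff₀' hδ0, ← Real.log_rpow (by positivity)]
  calc Real.log ((1 + x) ^ δ) ≤ (1 + x) ^ δ - 1 := Real.log_le_sub_one_of_pos (by positivity)
    _ ≤ (1 ^ δ + x ^ δ) - 1 := by
      gcongr
      exact Real.rpow_add_le_add_rpow zero_le_one hx hδ0.le hδ1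
    _ = x ^ δ := by rw [Real.one_rpow, add_sub_cancel_left]

lemma log_norm_sub_log_norm_le (ha : a ≠ 0) (hb : b ≠ 0) (hδ0 : 0 < δ) (hδ1 : δ ≤ 1) :
    Real.log ‖a‖ - Real.log ‖b‖ ≤ ‖a - b‖ ^ δ / δ * ‖b‖ ^ (-δ) := by
  have ha' : 0 < ‖a‖ := norm_pos_iff.2 ha
  have hb' : 0 < ‖b‖ := norm_pos_iff.2 hb
  calc Real.log ‖a‖ - Real.log ‖b‖ = Real.log (‖a‖ / ‖b‖) := (Real.log_div ha'.ne' hb'.ne').symm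
    _ ≤ Real.log (1 + ‖a - b‖ / ‖b‖) := by
      gcongr
      rw [← div_self hb'.ne', ← add_div]
      gcongr
      exact norm_le_norm_add_norm_sub' a b
    _ ≤ (‖a - b‖ / ‖b‖) ^ δ / δ := log_one_add_le_rpow_div (by positivity) hδ0 hδ1
    _ = ‖a - b‖ ^ δ / δ * ‖b‖ ^ (-δ) := by
      rw [Real.div_rpow (norm_nonneg _) (norm_nonneg _), Real.rpow_neg (norm_nonneg _)]
      ring

lemma abs_log_norm_sub_log_norm_le (ha : a ≠ 0) (hb : b ≠ 0) (hδ0 : 0 < δ) (hδ1 : δ ≤ 1) :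
    |Real.log ‖a‖ - Real.log ‖b‖| ≤ ‖a - b‖ ^ δ / δ * (‖a‖ ^ (-δ) + ‖b‖ ^ (-δ)) := by
  have hab := log_norm_sub_log_norm_le ha hb hδ0 hδ1
  have hba := log_norm_sub_log_norm_le hb ha hδ0 hδ1
  rw [norm_sub_rev] at hba
  have ha0 : 0 ≤ ‖a - b‖ ^ δ / δ * ‖a‖ ^ (-δ) := by positivity
  have hb0 : 0 ≤ ‖a - b‖ ^ δ / δ * ‖b‖ ^ (-δ) := by positivity
  rw [abs_le, mul_add]
  constructor <;> linarith

lemma abs_log_norm_sub_log_norm_le_div {m : ℝ} (hm : 0 < m) (hma : m ≤ ‖a‖) (hmb : m ≤ ‖b‖) :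
    |Real.log ‖a‖ - Real.log ‖b‖| ≤ ‖a - b‖ / m := by
  have hle {a b : E} (hma : m ≤ ‖a‖) (hmb : m ≤ ‖b‖) :
      Real.log ‖a‖ - Real.log ‖b‖ ≤ ‖a - b‖ / m := by
    have hlog := log_norm_sub_log_norm_le (norm_pos_iff.1 (hm.trans_le hma))
      (norm_pos_iff.1 (hm.trans_le hmb)) one_pos le_rfl
    rw [Real.rpow_one, div_one, Real.rpow_neg_one, ← div_eq_mul_inv] at hlog
    exact hlog.trans (by gcongr)
  rw [abs_sub_le_iff]
  exact ⟨hle hma hmb, norm_sub_rev b a ▸ hle hmb hma⟩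

end LogNorm

section Kernels

open Complex
open Real (circleAverage)

variable {s ρ : ℝ} {z w i : ℂ}

lemma abs_poissonKernel_sub_le {ζ : ℂ} (hz : ‖z‖ ≤ ρ) (hw : ‖w‖ ≤ ρ) (hρ : ρ < s) (hζ : ‖ζ‖ = s) :
    |poissonKernel 0 w ζ - poissonKernel 0 z ζ| ≤ 2 * ‖w - z‖ * s / (s - ρ) ^ 2 := by
  have hρs : 0 < s - ρ := sub_pos.2 hρ
  have hζz : s - ρ ≤ ‖ζ - z‖ := by linarith [norm_sub_norm_le ζ z]
  have hζw : s - ρ ≤ ‖ζ - w‖ := by linarith [norm_sub_norm_le ζ w]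
  have hζz' : ζ - z ≠ 0 := norm_pos_iff.1 (hρs.trans_le hζz)
  have hζw' : ζ - w ≠ 0 := norm_pos_iff.1 (hρs.trans_le hζw)
  have hs : 0 ≤ s := hζ ▸ norm_nonneg ζ
  simp only [poissonKernel_eq_re_herglotzRieszKernel, Function.comp_apply, ← sub_re]
  calc |(herglotzRieszKernel 0 w ζ - herglotzRieszKernel 0 z ζ).re|
      ≤ ‖herglotzRieszKernel 0 w ζ - herglotzRieszKernel 0 z ζ‖ := abs_re_le_norm _
    _ = ‖2 * (w - z) * ζ / ((ζ - w) * (ζ - z))‖ := by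
      congr 1
      simp only [herglotzRieszKernel_def, sub_zero]
      field_simp
      ring
    _ = 2 * ‖w - z‖ * s / (‖ζ - w‖ * ‖ζ - z‖) := by simp [hζ]
    _ ≤ 2 * ‖w - z‖ * s / (s - ρ) ^ 2 := by
      rw [sq]
      gcongr

lemma abs_circleAverage_poissonKernel_sub_le {u : ℂ → ℝ} (hu : CircleIntegrable u 0 s)
    (hz : ‖z‖ ≤ ρ) (hw : ‖w‖ ≤ ρ) (hρ : ρ < s) :
    |circleAverage (fun ζ ↦ poissonKernel 0 w ζ * u ζ) 0 s -
        circleAverage (fun ζ ↦ poissonKernel 0 z ζ * u ζ) 0 s| ≤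
      2 * ‖w - z‖ * s / (s - ρ) ^ 2 * circleAverage (fun ζ ↦ |u ζ|) 0 s := by
  have hs : 0 < s := (norm_nonneg z).trans_lt (hz.trans_lt hρ)
  have hzint := circleIntegrable_poissonKernel_mul hu (mem_ball_zero_iff.2 (hz.trans_lt hρ))
  have hwint := circleIntegrable_poissonKernel_mul hu (mem_ball_zero_iff.2 (hw.trans_lt hρ))
  rw [← Real.circleAverage_fun_sub hwint hzint, ← smul_eq_mul (_ / _),
    ← Real.circleAverage_fun_smul]
  refine Real.abs_circleAverage_le_circleAverage_abs.trans
    (Real.circleAverage_mono (hwint.sub hzint).abs (hu.abs.const_mul _) fun ζ hζ ↦ ?_)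
  rw [abs_of_pos hs, mem_sphere_zero_iff_norm] at hζ
  simp only [Pi.abs_apply, smul_eq_mul, ← sub_mul, abs_mul]
  gcongr
  exact abs_poissonKernel_sub_le hz hw hρ hζ

lemma mul_sub_le_norm_sq_sub_conj_mul (hs : 0 ≤ s) (hi : ‖i‖ ≤ s) (hz : ‖z‖ ≤ ρ) :
    s * (s - ρ) ≤ ‖(s : ℂ) ^ 2 - (starRingEnd ℂ) i * z‖ := by
  calc s * (s - ρ) = s ^ 2 - s * ρ := by ring
    _ ≤ s ^ 2 - ‖i‖ * ‖z‖ := by gcongr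
    _ = ‖(s : ℂ) ^ 2‖ - ‖(starRingEnd ℂ) i * z‖ := by simp
    _ ≤ ‖(s : ℂ) ^ 2 - (starRingEnd ℂ) i * z‖ := norm_sub_norm_le _ _

lemma log_norm_canonicalFactor (hρ : ρ < s) (hi : ‖i‖ ≤ s) (hz : ‖z‖ ≤ ρ) (hzi : z ≠ i) :
    Real.log ‖canonicalFactor s i z‖ =
      Real.log ‖(s : ℂ) ^ 2 - (starRingEnd ℂ) i * z‖ - Real.log s - Real.log ‖z - i‖ := by
  have hs : 0 < s := (norm_nonneg z).trans_lt (hz.trans_lt hρ)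
  have hnum := (mul_pos hs (sub_pos.2 hρ)).trans_le (mul_sub_le_norm_sq_sub_conj_mul hs.le hi hz)
  have hzi' : ‖z - i‖ ≠ 0 := norm_ne_zero_iff.2 (sub_ne_zero.2 hzi)
  rw [canonicalFactor_apply, norm_div, norm_mul, norm_real, Real.norm_of_nonneg hs.le,
    Real.log_div hnum.ne' (mul_ne_zero hs.ne' hzi'), Real.log_mul hs.ne' hzi', sub_sub]

lemma abs_log_norm_sq_sub_conj_mul_sub_le (hρ : ρ < s) (hi : ‖i‖ ≤ s) (hz : ‖z‖ ≤ ρ)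
    (hw : ‖w‖ ≤ ρ) :
    |Real.log ‖(s : ℂ) ^ 2 - (starRingEnd ℂ) i * z‖ -
        Real.log ‖(s : ℂ) ^ 2 - (starRingEnd ℂ) i * w‖| ≤ ‖w - z‖ / (s - ρ) := by
  have hs : 0 < s := (norm_nonneg z).trans_lt (hz.trans_lt hρ)
  have hρs : 0 < s - ρ := sub_pos.2 hρ
  calc _ ≤ ‖(s ^ 2 - (starRingEnd ℂ) i * z) - (s ^ 2 - (starRingEnd ℂ) i * w)‖ / (s * (s - ρ)) :=
        abs_log_norm_sub_log_norm_le_div (mul_pos hs hρs)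
          (mul_sub_le_norm_sq_sub_conj_mul hs.le hi hz)
          (mul_sub_le_norm_sq_sub_conj_mul hs.le hi hw)
    _ = ‖i‖ * ‖w - z‖ / (s * (s - ρ)) := by
      rw [sub_sub_sub_cancel_left, ← mul_sub, norm_mul, RCLike.norm_conj]
    _ ≤ s * ‖w - z‖ / (s * (s - ρ)) := by gcongr
    _ = ‖w - z‖ / (s - ρ) := mul_div_mul_left _ _ hs.ne'

lemma abs_log_norm_canonicalFactor_sub_le {δ : ℝ} (hδ0 : 0 < δ) (hδ1 : δ ≤ 1) (hρ : ρ < s)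
    (hi : ‖i‖ ≤ s) (hz : ‖z‖ ≤ ρ) (hw : ‖w‖ ≤ ρ) (hzi : z ≠ i) (hwi : w ≠ i) :
    |Real.log ‖canonicalFactor s i w‖ - Real.log ‖canonicalFactor s i z‖| ≤
      ‖w - z‖ / (s - ρ) + ‖w - z‖ ^ δ / δ * (‖w - i‖ ^ (-δ) + ‖z - i‖ ^ (-δ)) := by
  have hnum := abs_log_norm_sq_sub_conj_mul_sub_le hρ hi hz hw
  have hden := abs_log_norm_sub_log_norm_le (sub_ne_zero.2 hwi) (sub_ne_zero.2 hzi) hδ0 hδ1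
  rw [sub_sub_sub_cancel_right] at hden
  rw [log_norm_canonicalFactor hρ hi hw hwi, log_norm_canonicalFactor hρ hi hz hzi]
  rw [abs_le] at hnum hden ⊢
  constructor <;> linarith

end Kernels

section SineIntegrals

open Real (sin pi_pos)
open scoped Real

variable {δ : ℝ}

lemma abs_sin_rpow_neg_le {t : ℝ} (hδ0 : 0 ≤ δ) (ht0 : 0 < t) (ht : t ≤ π / 2) :
    |sin t| ^ (-δ) ≤ (2 / π) ^ (-δ) * t ^ (-δ) := by
  rw [← Real.mul_rpow (by positivity) ht0.le]
  exact Real.rpow_le_rpow_of_nonpos (by positivity)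
    ((Real.mul_le_sin ht0.le ht).trans (le_abs_self _)) (neg_nonpos.2 hδ0)

lemma intervalIntegrable_abs_sin_rpow_neg_zero_pi_div_two (hδ0 : 0 ≤ δ) (hδ1 : δ < 1) :
    IntervalIntegrable (fun t ↦ |sin t| ^ (-δ)) volume 0 (π / 2) := by
  refine ((intervalIntegral.intervalIntegrable_rpow' (neg_lt_neg hδ1)).const_mul
    ((2 / π) ^ (-δ))).mono_fun (Measurable.aestronglyMeasurable (by fun_prop)) ?_
  rw [EventuallyLE, ae_restrict_iff' measurableSet_uIoc, Set.uIoc_of_le (by positivity)]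
  refine ae_of_all _ fun t ht ↦ ?_
  rw [Real.norm_of_nonneg (by positivity)]
  exact (abs_sin_rpow_neg_le hδ0 ht.1 ht.2).trans (Real.le_norm_self _)

lemma integral_abs_sin_rpow_neg_zero_pi_div_two_le (hδ0 : 0 ≤ δ) (hδ1 : δ < 1) :
    ∫ t in (0 : ℝ)..(π / 2), |sin t| ^ (-δ) ≤ π / 2 / (1 - δ) := by
  have hδ : -1 < -δ := neg_lt_neg hδ1
  calc ∫ t in (0 : ℝ)..(π / 2), |sin t| ^ (-δ)
      ≤ ∫ t in (0 : ℝ)..(π / 2), (2 / π) ^ (-δ) * t ^ (-δ) :=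
        intervalIntegral.integral_mono_on_of_le_Ioo (by positivity)
          (intervalIntegrable_abs_sin_rpow_neg_zero_pi_div_two hδ0 hδ1)
          ((intervalIntegral.intervalIntegrable_rpow' hδ).const_mul _)
          fun t ht ↦ abs_sin_rpow_neg_le hδ0 ht.1 ht.2.le
    _ = (π / 2) ^ δ * ((π / 2) ^ (1 - δ) / (1 - δ)) := by
      rw [intervalIntegral.integral_const_mul, integral_rpow (.inl hδ), neg_add_eq_sub,
        Real.zero_rpow (sub_pos.2 hδ1).ne', sub_zero, ← inv_div π, Real.inv_rpow (by positivity),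
        ← Real.rpow_neg (by positivity), neg_neg]
    _ = π / 2 / (1 - δ) := by
      rw [mul_div_assoc', ← Real.rpow_add (by positivity), add_sub_cancel, Real.rpow_one]

lemma intervalIntegrable_abs_sin_rpow_neg (hδ0 : 0 ≤ δ) (hδ1 : δ < 1) (a b : ℝ) :
    IntervalIntegrable (fun t ↦ |sin t| ^ (-δ)) volume a b := by
  have hleft := intervalIntegrable_abs_sin_rpow_neg_zero_pi_div_two hδ0 hδ1
  have hright : IntervalIntegrable (fun t ↦ |sin t| ^ (-δ)) volume (π / 2) π := by
    simpa [Real.sin_pi_sub, sub_half] using (hleft.comp_sub_left π).symm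
  have hper : Function.Periodic (fun t ↦ |sin t| ^ (-δ)) π := fun t ↦ by simp
  exact hper.intervalIntegrable₀ pi_pos.ne' (hleft.trans hright) a b

lemma intervalIntegrable_abs_sin_sub_rpow_neg (hδ0 : 0 ≤ δ) (hδ1 : δ < 1) (φ a b : ℝ) :
    IntervalIntegrable (fun t ↦ |sin (t - φ)| ^ (-δ)) volume a b := by
  simpa using (intervalIntegrable_abs_sin_rpow_neg hδ0 hδ1 (a - φ) (b - φ)).comp_sub_right φ

lemma integral_abs_sin_rpow_neg_period_le (hδ0 : 0 ≤ δ) (hδ1 : δ < 1) (a : ℝ) :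
    ∫ t in a..(a + π), |sin t| ^ (-δ) ≤ π / (1 - δ) := by
  have hint := intervalIntegrable_abs_sin_rpow_neg hδ0 hδ1
  have hper : Function.Periodic (fun t ↦ |sin t| ^ (-δ)) π := fun t ↦ by simp
  have hsymm : ∫ t in (π / 2)..π, |sin t| ^ (-δ) = ∫ t in (0 : ℝ)..(π / 2), |sin t| ^ (-δ) := by
    simpa [Real.sin_pi_sub, sub_half] using
      (intervalIntegral.integral_comp_sub_left (fun t ↦ |sin t| ^ (-δ)) (a := 0) (b := π / 2)
        π).symm
  rw [hper.intervalIntegral_add_eq a 0, zero_add,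
    ← intervalIntegral.integral_add_adjacent_intervals (hint 0 (π / 2)) (hint (π / 2) π), hsymm]
  have hquarter := integral_abs_sin_rpow_neg_zero_pi_div_two_le hδ0 hδ1
  calc _ ≤ π / 2 / (1 - δ) + π / 2 / (1 - δ) := add_le_add hquarter hquarter
    _ = π / (1 - δ) := by rw [← add_div, add_halves]

lemma integral_abs_sin_sub_rpow_neg_le (hδ0 : 0 ≤ δ) (hδ1 : δ < 1) (φ : ℝ) :
    ∫ t in (0 : ℝ)..(2 * π), |sin (t - φ)| ^ (-δ) ≤ 2 * π / (1 - δ) := by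
  have hint := intervalIntegrable_abs_sin_rpow_neg hδ0 hδ1
  have hend : 2 * π - φ = 0 - φ + π + π := by ring
  rw [intervalIntegral.integral_comp_sub_right (fun t ↦ |sin t| ^ (-δ)), hend,
    ← intervalIntegral.integral_add_adjacent_intervals (hint (0 - φ) (0 - φ + π)) (hint _ _),
    two_mul, add_div]
  exact add_le_add (integral_abs_sin_rpow_neg_period_le hδ0 hδ1 _)
    (integral_abs_sin_rpow_neg_period_le hδ0 hδ1 _)

lemma ae_sin_sub_ne_zero (φ : ℝ) : ∀ᵐ θ : ℝ, sin (θ - φ) ≠ 0 := by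
  filter_upwards [(Set.countable_range fun n : ℤ ↦ (n : ℝ) * π + φ).ae_notMem volume] with θ hθ h
  obtain ⟨n, hn⟩ := Real.sin_eq_zero_iff.1 h
  exact hθ ⟨n, eq_sub_iff_add_eq.1 hn⟩

end SineIntegrals

section CircleSingularity

open Complex
open Real (circleAverage)
open scoped Real

variable {r δ : ℝ}

-- The left-hand side is the distance from `circleMap 0 r θ` to the real line through `0` and `a`.
lemma mul_abs_sin_sub_arg_le_norm_circleMap_sub (hr : 0 ≤ r) (a : ℂ) (θ : ℝ) :
    r * |Real.sin (θ - arg a)| ≤ ‖circleMap 0 r θ - a‖ := by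
  have hrot : circleMap 0 r θ - a =
      (r * exp ((θ - arg a : ℝ) * I) - ‖a‖) * exp (arg a * I) := by
    rw [sub_mul, norm_mul_exp_arg_mul_I, mul_assoc, ← exp_add, circleMap_zero]
    push_cast
    ring_nf
  calc r * |Real.sin (θ - arg a)| = |(r * exp ((θ - arg a : ℝ) * I) - ‖a‖).im| := by
        rw [sub_im, ofReal_im, sub_zero, im_ofReal_mul, exp_ofReal_mul_I_im, abs_mul,
          abs_of_nonneg hr]
    _ ≤ ‖(r * exp ((θ - arg a : ℝ) * I) - ‖a‖)‖ := abs_im_le_norm _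
    _ = ‖circleMap 0 r θ - a‖ := by rw [hrot, norm_mul, norm_exp_ofReal_mul_I, mul_one]

lemma ae_norm_circleMap_sub_rpow_neg_le (hr : 0 < r) (hδ0 : 0 ≤ δ) (a : ℂ) :
    ∀ᵐ θ, ‖circleMap 0 r θ - a‖ ^ (-δ) ≤ r ^ (-δ) * |Real.sin (θ - arg a)| ^ (-δ) := by
  filter_upwards [ae_sin_sub_ne_zero (arg a)] with θ hθ
  rw [← Real.mul_rpow hr.le (abs_nonneg _)]
  exact Real.rpow_le_rpow_of_nonpos (by positivity)
    (mul_abs_sin_sub_arg_le_norm_circleMap_sub hr.le a θ) (neg_nonpos.2 hδ0)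

lemma circleIntegrable_norm_sub_rpow_neg (hr : 0 < r) (hδ0 : 0 ≤ δ) (hδ1 : δ < 1) (a : ℂ) :
    CircleIntegrable (fun z ↦ ‖z - a‖ ^ (-δ)) 0 r := by
  have hmeas : Measurable fun θ ↦ ‖circleMap 0 r θ - a‖ ^ (-δ) := by
    have := (continuous_circleMap 0 r).measurable
    fun_prop
  refine ((intervalIntegrable_abs_sin_sub_rpow_neg hδ0 hδ1 (arg a) _ _).const_mul
    (r ^ (-δ))).mono_fun hmeas.aestronglyMeasurable (ae_restrict_of_ae ?_)
  filter_upwards [ae_norm_circleMap_sub_rpow_neg_le hr hδ0 a] with θ hθ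
  rw [Real.norm_of_nonneg (by positivity)]
  exact hθ.trans (Real.le_norm_self _)

lemma circleAverage_norm_sub_rpow_neg_le (hr : 0 < r) (hδ0 : 0 ≤ δ) (hδ1 : δ < 1) (a : ℂ) :
    circleAverage (fun z ↦ ‖z - a‖ ^ (-δ)) 0 r ≤ 1 / ((1 - δ) * r ^ δ) := by
  rw [circleAverage, smul_eq_mul]
  calc (2 * π)⁻¹ * ∫ θ in (0 : ℝ)..(2 * π), ‖circleMap 0 r θ - a‖ ^ (-δ)
      ≤ (2 * π)⁻¹ * ∫ θ in (0 : ℝ)..(2 * π), r ^ (-δ) * |Real.sin (θ - arg a)| ^ (-δ) := by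
        gcongr
        exact intervalIntegral.integral_mono_ae (by positivity)
          (circleIntegrable_norm_sub_rpow_neg hr hδ0 hδ1 a)
          ((intervalIntegrable_abs_sin_sub_rpow_neg hδ0 hδ1 _ _ _).const_mul _)
          (ae_norm_circleMap_sub_rpow_neg_le hr hδ0 a)
    _ ≤ (2 * π)⁻¹ * (r ^ (-δ) * (2 * π / (1 - δ))) := by
      rw [intervalIntegral.integral_const_mul]
      gcongr
      exact integral_abs_sin_sub_rpow_neg_le hδ0 hδ1 _
    _ = 1 / ((1 - δ) * r ^ δ) := by
      rw [Real.rpow_neg hr.le]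
      field_simp

lemma circleIntegrable_const_add_mul_norm_sub_rpow_neg (hr : 0 < r) (hδ0 : 0 ≤ δ) (hδ1 : δ < 1)
    (A B : ℝ) (a b : ℂ) :
    CircleIntegrable (fun z ↦ A + B * (‖z - a‖ ^ (-δ) + ‖z - b‖ ^ (-δ))) 0 r :=
  (circleIntegrable_const _ _ _).add
    (((circleIntegrable_norm_sub_rpow_neg hr hδ0 hδ1 a).add
      (circleIntegrable_norm_sub_rpow_neg hr hδ0 hδ1 b)).const_mul B)

lemma circleAverage_const_add_mul_norm_sub_rpow_neg_le (hr : 0 < r) (hδ0 : 0 ≤ δ) (hδ1 : δ < 1)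
    (A : ℝ) {B : ℝ} (hB : 0 ≤ B) (a b : ℂ) :
    circleAverage (fun z ↦ A + B * (‖z - a‖ ^ (-δ) + ‖z - b‖ ^ (-δ))) 0 r ≤
      A + B * (2 / ((1 - δ) * r ^ δ)) := by
  have ha := circleIntegrable_norm_sub_rpow_neg hr hδ0 hδ1 a
  have hb := circleIntegrable_norm_sub_rpow_neg hr hδ0 hδ1 b
  have hab : CircleIntegrable (fun z ↦ B * (‖z - a‖ ^ (-δ) + ‖z - b‖ ^ (-δ))) 0 r :=
    (ha.add hb).const_mul B
  rw [Real.circleAverage_fun_add (circleIntegrable_const A 0 r) hab, Real.circleAverage_const]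
  simp only [← smul_eq_mul B]
  rw [Real.circleAverage_fun_smul, Real.circleAverage_fun_add ha hb, smul_eq_mul, smul_eq_mul,
    ← one_add_one_eq_two, add_div]
  gcongr <;> exact circleAverage_norm_sub_rpow_neg_le hr hδ0 hδ1 _

lemma circleAverage_le_of_ae_le {u v : ℂ → ℝ} {c : ℂ} (hu : CircleIntegrable u c r)
    (hv : CircleIntegrable v c r) (huv : ∀ᵐ θ, u (circleMap c r θ) ≤ v (circleMap c r θ)) :
    circleAverage u c r ≤ circleAverage v c r := by
  rw [circleAverage, circleAverage, smul_eq_mul, smul_eq_mul]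
  gcongr
  exact intervalIntegral.integral_mono_ae (by positivity) hu hv huv

end CircleSingularity

section FirstMainTheorem

open MeromorphicOn ValueDistribution
open Real (circleAverage posLog)
open scoped Real

variable {f : ℂ → ℂ} {s R : ℝ}

lemma circleAverage_abs_log_norm (hf : MeromorphicOn f (sphere 0 |s|)) :
    circleAverage (fun z ↦ |Real.log ‖f z‖|) 0 s = proximity f ⊤ s + proximity f⁻¹ ⊤ s := by
  rw [proximity_top, proximity_top, ← Real.circleAverage_fun_add hf.circleIntegrable_posLog_norm
    hf.inv.circleIntegrable_posLog_norm]
  congr 1 with z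
  rw [Pi.inv_apply, norm_inv, ← Real.half_mul_log_add_log_abs (x := ‖f z‖),
    ← Real.half_mul_log_add_log_abs (x := ‖f z‖⁻¹), Real.log_inv, abs_neg]
  ring

lemma logCounting_abs_divisor :
    |divisor f Set.univ|.logCounting = logCounting f 0 + logCounting f ⊤ := by
  rw [← posPart_add_negPart, map_add, logCounting_zero, logCounting_top]

lemma characteristic_inv_le (hf : Meromorphic f) (h0 : AnalyticAt ℂ f 0) (hf0 : f 0 ≠ 0)
    (hR : R ≠ 0) : characteristic f⁻¹ ⊤ R ≤ characteristic f ⊤ R + posLog ‖f 0‖⁻¹ := by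
  have hjensen := characteristic_sub_characteristic_inv_of_ne_zero hf hR
  rw [h0.meromorphicTrailingCoeffAt_of_ne_zero hf0] at hjensen
  have hlog : Real.log ‖f 0‖⁻¹ ≤ posLog ‖f 0‖⁻¹ := le_max_right _ _
  rw [Real.log_inv] at hlog
  linarith

lemma circleAverage_abs_log_norm_le (hf : Meromorphic f) (h0 : AnalyticAt ℂ f 0) (hf0 : f 0 ≠ 0)
    (hs : 1 ≤ s) (hsR : s ≤ R) :
    circleAverage (fun z ↦ |Real.log ‖f z‖|) 0 s ≤
      2 * (characteristic f ⊤ R + posLog ‖f 0‖⁻¹) := by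
  have hs0 : 0 < s := one_pos.trans_le hs
  have hprox (g : ℂ → ℂ) : proximity g ⊤ s ≤ characteristic g ⊤ s :=
    le_add_of_nonneg_right (logCounting_nonneg hs)
  have hmono := characteristic_monotoneOn hf hs0 (hs0.trans_le hsR) hsR
  have hinv := characteristic_inv_le hf h0 hf0 hs0.ne'
  have hpos : 0 ≤ posLog ‖f 0‖⁻¹ := Real.posLog_nonneg
  rw [circleAverage_abs_log_norm hf.meromorphicOn]
  linarith [hprox f, hprox f⁻¹]

lemma divisor_apply_eq_zero {U : Set ℂ} {z : ℂ} (hz : AnalyticAt ℂ f z) (hfz : f z ≠ 0) :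
    divisor f U z = 0 := by
  rw [divisor_def, hz.meromorphicNFAt.meromorphicOrderAt_eq_zero_iff.2 hfz, WithTop.untop₀_zero,
    ite_self]

lemma ballCount_abs_divisor_mul_le (hf : Meromorphic f) (h0 : AnalyticAt ℂ f 0) (hf0 : f 0 ≠ 0)
    (hs : 0 ≤ s) (hsR : s < R) :
    ballCount |divisor f Set.univ| s * (1 - s / R) ≤
      2 * (characteristic f ⊤ R + posLog ‖f 0‖⁻¹) := by
  have hD0 : |divisor f Set.univ| 0 = 0 := by
    rw [locallyFinsupp_abs_apply, divisor_apply_eq_zero h0 hf0, abs_zero]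
  have hcount := ballCount_mul_one_sub_div_le_logCounting _ (abs_nonneg _) hD0 hs hsR
  rw [logCounting_abs_divisor, Pi.add_apply, ← logCounting_inv] at hcount
  have hN (g : ℂ → ℂ) : logCounting g ⊤ R ≤ characteristic g ⊤ R :=
    le_add_of_nonneg_left (proximity_nonneg R)
  have hinv := characteristic_inv_le hf h0 hf0 (hs.trans_lt hsR).ne'
  have hpos : 0 ≤ posLog ‖f 0‖⁻¹ := Real.posLog_nonneg
  linarith [hN f, hN f⁻¹]

end FirstMainTheorem

section ShiftBound

open MeromorphicOn ValueDistribution Complex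
open Real (circleAverage)
open scoped Real

variable {f : ℂ → ℂ} {r s ρ δ : ℝ} {z w : ℂ}

lemma abs_divisor_le_abs_divisor_univ (hf : Meromorphic f) (U : Set ℂ) (i : ℂ) :
    |divisor f U i| ≤ |divisor f Set.univ i| := by
  by_cases hi : i ∈ U
  · rw [divisor_apply hf.meromorphicOn hi, divisor_apply hf.meromorphicOn (Set.mem_univ i)]
  · rw [Function.locallyFinsuppWithin.apply_eq_zero_of_notMem _ hi, abs_zero]
    exact abs_nonneg _

lemma abs_finsum_divisor_mul_sub_le (hf : Meromorphic f) {g h b : ℂ → ℝ}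
    (hgh : ∀ i ∈ closedBallSupport (divisor f Set.univ) s, |g i - h i| ≤ b i) :
    |∑ᶠ i, divisor f (ball 0 s) i * g i - ∑ᶠ i, divisor f (ball 0 s) i * h i| ≤
      ∑ i ∈ closedBallSupport (divisor f Set.univ) s, |(divisor f Set.univ i : ℝ)| * b i := by
  have hsupport {i : ℂ} (hi : divisor f (ball 0 s) i ≠ 0) :
      i ∈ closedBallSupport (divisor f Set.univ) s := by
    have hball : i ∈ ball 0 s := (divisor f (ball 0 s)).supportWithinDomain hi
    exact mem_closedBallSupport.2 ⟨(mem_ball_zero_iff.1 hball).le,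
      abs_pos.1 ((abs_pos.2 hi).trans_le (abs_divisor_le_abs_divisor_univ hf _ i))⟩
  have hsum (g : ℂ → ℝ) : ∑ᶠ i, divisor f (ball 0 s) i * g i =
      ∑ i ∈ closedBallSupport (divisor f Set.univ) s, divisor f (ball 0 s) i * g i :=
    finsum_eq_sum_of_support_subset _ fun i hi ↦
      hsupport (Int.cast_ne_zero.1 (left_ne_zero_of_mul hi))
  rw [hsum, hsum, ← Finset.sum_sub_distrib]
  refine (Finset.abs_sum_le_sum_abs _ _).trans (Finset.sum_le_sum fun i hi ↦ ?_)
  rw [← mul_sub, abs_mul]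
  exact mul_le_mul (mod_cast abs_divisor_le_abs_divisor_univ hf _ i) (hgh i hi) (abs_nonneg _)
    (abs_nonneg _)

theorem abs_log_norm_sub_log_norm_le_circleAverage_add_sum (hf : Meromorphic f)
    (hf' : ∀ z, meromorphicOrderAt f z ≠ ⊤) (hδ0 : 0 < δ) (hδ1 : δ ≤ 1) (hρ : ρ < s)
    (hz : ‖z‖ ≤ ρ) (hw : ‖w‖ ≤ ρ) (hfz : AnalyticAt ℂ f z ∧ f z ≠ 0)
    (hfw : AnalyticAt ℂ f w ∧ f w ≠ 0) :
    |Real.log ‖f w‖ - Real.log ‖f z‖| ≤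
      2 * ‖w - z‖ * s / (s - ρ) ^ 2 * circleAverage (fun ζ ↦ |Real.log ‖f ζ‖|) 0 s +
        ∑ i ∈ closedBallSupport (divisor f Set.univ) s, |(divisor f Set.univ i : ℝ)| *
          (‖w - z‖ / (s - ρ) + ‖w - z‖ ^ δ / δ * (‖w - i‖ ^ (-δ) + ‖z - i‖ ^ (-δ))) := by
  have hlog {u : ℂ} (hu : ‖u‖ ≤ ρ) (hfu : AnalyticAt ℂ f u ∧ f u ≠ 0) :
      Real.log ‖f u‖ = circleAverage (fun ζ ↦ poissonKernel 0 u ζ * Real.log ‖f ζ‖) 0 s -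
        ∑ᶠ i, divisor f (ball 0 s) i * Real.log ‖canonicalFactor s i u‖ := by
    rw [poissonJensen_formula hf.meromorphicOn (fun v _ ↦ hf' v)
      (mem_ball_zero_iff.2 (hu.trans_lt hρ))
      (hfu.1.meromorphicNFAt.meromorphicOrderAt_eq_zero_iff.2 hfu.2),
      hfu.1.meromorphicTrailingCoeffAt_of_ne_zero hfu.2, add_sub_cancel_left]
  have hne {u : ℂ} (hfu : AnalyticAt ℂ f u ∧ f u ≠ 0) {i : ℂ} (hi : divisor f Set.univ i ≠ 0) :
      u ≠ i := by
    rintro rfl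
    exact hi (divisor_apply_eq_zero hfu.1 hfu.2)
  have hkernel := abs_circleAverage_poissonKernel_sub_le (u := fun ζ ↦ Real.log ‖f ζ‖)
    hf.meromorphicOn.circleIntegrable_log_norm hz hw hρ
  have hfactors := abs_finsum_divisor_mul_sub_le (s := s) hf
    (g := fun i ↦ Real.log ‖canonicalFactor s i w‖)
    (h := fun i ↦ Real.log ‖canonicalFactor s i z‖)
    (b := fun i ↦ ‖w - z‖ / (s - ρ) + ‖w - z‖ ^ δ / δ * (‖w - i‖ ^ (-δ) + ‖z - i‖ ^ (-δ)))
    fun i hi ↦ by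
      obtain ⟨his, hi0⟩ := mem_closedBallSupport.1 hi
      exact abs_log_norm_canonicalFactor_sub_le hδ0 hδ1 hρ his hz hw (hne hfz hi0) (hne hfw hi0)
  rw [hlog hw hfw, hlog hz hfz, sub_sub_sub_comm]
  exact (abs_sub _ _).trans (add_le_add hkernel hfactors)

lemma ae_analyticAt_circleMap_and_ne_zero (hf : Meromorphic f)
    (hf' : ∀ z, meromorphicOrderAt f z ≠ ⊤) (c : ℂ) (hr : r ≠ 0) :
    ∀ᵐ θ, AnalyticAt ℂ f (circleMap c r θ) ∧ f (circleMap c r θ) ≠ 0 := by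
  have hsphere : MeromorphicOn f (sphere c |r|) := hf.meromorphicOn
  have hcodiscrete : ∀ᶠ z in codiscreteWithin (sphere c |r|), AnalyticAt ℂ f z ∧ f z ≠ 0 :=
    Filter.Eventually.and hsphere.analyticAt_mem_codiscreteWithin <|
      MeromorphicAt.MeromorphicOn.codiscreteWithin_setOfPred_ne_zero hsphere fun z _ ↦ hf' z
  rw [← Measure.restrict_univ (μ := volume)]
  exact ae_restrict_le_codiscreteWithin .univ (circleMap_preimage_codiscrete hr hcodiscrete)

lemma posLog_norm_shift_div_le (hf : Meromorphic f)
    (hf' : ∀ z, meromorphicOrderAt f z ≠ ⊤) {c : ℂ} (hδ0 : 0 < δ) (hδ1 : δ ≤ 1)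
    (hs : r + ‖c‖ < s) (hz : ‖z‖ = r) (hfz : AnalyticAt ℂ f z ∧ f z ≠ 0)
    (hfw : AnalyticAt ℂ f (z + c) ∧ f (z + c) ≠ 0) :
    Real.posLog ‖f (z + c) / f z‖ ≤
      2 * ‖c‖ * s / (s - (r + ‖c‖)) ^ 2 * circleAverage (fun ζ ↦ |Real.log ‖f ζ‖|) 0 s +
        ∑ i ∈ closedBallSupport (divisor f Set.univ) s, |(divisor f Set.univ i : ℝ)| *
          (‖c‖ / (s - (r + ‖c‖)) + ‖c‖ ^ δ / δ * (‖z - (i - c)‖ ^ (-δ) + ‖z - i‖ ^ (-δ))) := by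
  have hbound := abs_log_norm_sub_log_norm_le_circleAverage_add_sum hf hf' hδ0 hδ1 hs
    (hz.trans_le (le_add_of_nonneg_right (norm_nonneg c))) (hz ▸ norm_add_le z c) hfz hfw
  rw [← Real.log_div (norm_ne_zero_iff.2 hfw.2) (norm_ne_zero_iff.2 hfz.2), ← norm_div] at hbound
  have hshift (i : ℂ) : z + c - i = z - (i - c) := (sub_sub_eq_add_sub z i c).symm
  rw [add_sub_cancel_left] at hbound
  simp only [hshift] at hbound
  exact max_le ((abs_nonneg _).trans hbound) ((le_abs_self _).trans hbound)

theorem circleAverage_posLog_norm_shift_div_le (hf : Meromorphic f)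
    (hf' : ∀ z, meromorphicOrderAt f z ≠ ⊤) {c : ℂ} (hδ0 : 0 < δ) (hδ1 : δ < 1) (hr : 0 < r)
    (hs : r + ‖c‖ < s) :
    circleAverage (fun z ↦ Real.posLog ‖f (z + c) / f z‖) 0 r ≤
      2 * ‖c‖ * s / (s - (r + ‖c‖)) ^ 2 * circleAverage (fun ζ ↦ |Real.log ‖f ζ‖|) 0 s +
        ballCount |divisor f Set.univ| s *
          (‖c‖ / (s - (r + ‖c‖)) + ‖c‖ ^ δ / δ * (2 / ((1 - δ) * r ^ δ))) := by
  set A := 2 * ‖c‖ * s / (s - (r + ‖c‖)) ^ 2 * circleAverage (fun ζ ↦ |Real.log ‖f ζ‖|) 0 s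
  set D := divisor f Set.univ
  let u (i z : ℂ) : ℝ := |(D i : ℝ)| *
    (‖c‖ / (s - (r + ‖c‖)) + ‖c‖ ^ δ / δ * (‖z - (i - c)‖ ^ (-δ) + ‖z - i‖ ^ (-δ)))
  have hu (i) (_ : i ∈ closedBallSupport D s) : CircleIntegrable (u i) 0 r :=
    (circleIntegrable_const_add_mul_norm_sub_rpow_neg hr hδ0.le hδ1 _ _ _ _).const_mul _
  have hA : CircleIntegrable (fun _ ↦ A) 0 r := circleIntegrable_const _ _ _
  have hquot : CircleIntegrable (fun z ↦ Real.posLog ‖f (z + c) / f z‖) 0 r :=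
    MeromorphicOn.circleIntegrable_posLog_norm (f := fun z ↦ f (z + c) / f z) fun z _ ↦
      (MeromorphicAt.comp_analyticAt (g := (· + c)) (hf (z + c)) (by fun_prop)).div (hf z)
  calc circleAverage (fun z ↦ Real.posLog ‖f (z + c) / f z‖) 0 r
      ≤ circleAverage ((fun _ ↦ A) + ∑ i ∈ closedBallSupport D s, u i) 0 r := by
        refine circleAverage_le_of_ae_le hquot (hA.add (CircleIntegrable.sum _ hu)) ?_
        filter_upwards [ae_analyticAt_circleMap_and_ne_zero hf hf' 0 hr.ne',
          ae_analyticAt_circleMap_and_ne_zero hf hf' c hr.ne'] with θ hz hzc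
        have hshift : circleMap c r θ = circleMap 0 r θ + c := by simp [circleMap, add_comm]
        rw [hshift] at hzc
        rw [Pi.add_apply, Finset.sum_apply]
        exact posLog_norm_shift_div_le hf hf' hδ0 hδ1.le hs (by simp [abs_of_pos hr]) hz hzc
    _ = A + ∑ i ∈ closedBallSupport D s, circleAverage (u i) 0 r := by
      rw [Real.circleAverage_add hA (CircleIntegrable.sum _ hu), Real.circleAverage_const,
        Real.circleAverage_sum hu]
    _ ≤ A + ∑ i ∈ closedBallSupport D s, |(D i : ℝ)| *
          (‖c‖ / (s - (r + ‖c‖)) + ‖c‖ ^ δ / δ * (2 / ((1 - δ) * r ^ δ))) := by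
      gcongr with i
      simp only [u, ← smul_eq_mul |(D i : ℝ)|, Real.circleAverage_fun_smul]
      exact smul_le_smul_of_nonneg_left (circleAverage_const_add_mul_norm_sub_rpow_neg_le hr
        hδ0.le hδ1 _ (by positivity) _ _) (abs_nonneg _)
    _ = _ := by
      rw [ballCount_abs_eq_sum, Int.cast_sum, Finset.sum_mul]
      simp only [Int.cast_abs]

theorem proximity_shift_div_le (hf : Meromorphic f) (h0 : AnalyticAt ℂ f 0) (hf0 : f 0 ≠ 0)
    {c : ℂ} {R : ℝ} (hδ0 : 0 < δ) (hδ1 : δ < 1) (hr : 1 ≤ r) (hs : r + ‖c‖ < s) (hsR : s < R) :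
    proximity (fun z ↦ f (z + c) / f z) ⊤ r ≤
      (4 * ‖c‖ * s / (s - (r + ‖c‖)) ^ 2 + 2 * R / (R - s) *
        (‖c‖ / (s - (r + ‖c‖)) + 2 * ‖c‖ ^ δ / (δ * (1 - δ) * r ^ δ))) *
          (characteristic f ⊤ R + Real.posLog ‖f 0‖⁻¹) := by
  have hr0 : 0 < r := one_pos.trans_le hr
  have hrs : r < s := (le_add_of_nonneg_right (norm_nonneg c)).trans_lt hs
  have hs0 : 0 < s := hr0.trans hrs
  have hR : 0 < R := hs0.trans hsR
  have : 0 < s - (r + ‖c‖) := sub_pos.2 hs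
  have hRs : 0 < R - s := sub_pos.2 hsR
  have : 0 < 1 - δ := sub_pos.2 hδ1
  have hf' : ∀ z, meromorphicOrderAt f z ≠ ⊤ :=
    hf.exists_meromorphicOrderAt_ne_top_iff_forall.1
      ⟨0, by simp [h0.meromorphicNFAt.meromorphicOrderAt_eq_zero_iff.2 hf0]⟩
  set K := characteristic f ⊤ R + Real.posLog ‖f 0‖⁻¹
  have hlog : circleAverage (fun ζ ↦ |Real.log ‖f ζ‖|) 0 s ≤ 2 * K :=
    circleAverage_abs_log_norm_le hf h0 hf0 (hr.trans hrs.le) hsR.le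
  have hcount : ballCount |divisor f Set.univ| s ≤ 2 * R / (R - s) * K := by
    have h := ballCount_abs_divisor_mul_le hf h0 hf0 hs0.le hsR
    rw [one_sub_div hR.ne', mul_div_assoc', div_le_iff₀ hR] at h
    rw [div_mul_eq_mul_div, le_div_iff₀ hRs]
    linarith
  rw [proximity_top]
  calc _ ≤ _ := circleAverage_posLog_norm_shift_div_le hf hf' hδ0 hδ1 hr0 hs
    _ ≤ 2 * ‖c‖ * s / (s - (r + ‖c‖)) ^ 2 * (2 * K) + 2 * R / (R - s) * K *
          (‖c‖ / (s - (r + ‖c‖)) + ‖c‖ ^ δ / δ * (2 / ((1 - δ) * r ^ δ))) := by gcongr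
    _ = _ := by
      rw [div_mul_div_comm, ← mul_assoc δ]
      ring

lemma shift_coeff_le {α C : ℝ} (hα : 1 < α) (hδ0 : 0 < δ) (hδ1 : δ < 1) (hr : 1 ≤ r) (hrρ : r ≤ ρ)
    (hC : 0 ≤ C) (hs : s = (α + 1) / 2 * ρ) :
    4 * C * s / (s - ρ) ^ 2 + 2 * (α * ρ) / (α * ρ - s) *
        (C / (s - ρ) + 2 * C ^ δ / (δ * (1 - δ) * r ^ δ)) ≤
      (8 * C * (3 * α + 1) + 8 * α * (α - 1) * C ^ δ) / (δ * (1 - δ) * (α - 1) ^ 2 * r ^ δ) := by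
  have hr0 : 0 < r := one_pos.trans_le hr
  have hρ : 0 < ρ := hr0.trans_le hrρ
  have hα1 : 0 < α - 1 := sub_pos.2 hα
  have hδ : 0 < 1 - δ := sub_pos.2 hδ1
  have hsρ : s - ρ = (α - 1) / 2 * ρ := by rw [hs]; ring
  have hRs : α * ρ - s = (α - 1) / 2 * ρ := by rw [hs]; ring
  have hrδ : δ * (1 - δ) * r ^ δ ≤ ρ := by
    have hδδ : δ * (1 - δ) ≤ 1 := mul_le_one₀ hδ1.le hδ.le (sub_le_self 1 hδ0.le)
    calc δ * (1 - δ) * r ^ δ ≤ 1 * r ^ (1 : ℝ) := by gcongr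
      _ = r := by rw [one_mul, Real.rpow_one]
      _ ≤ ρ := hrρ
  calc _ = 8 * C * (2 * α + 1) / ((α - 1) ^ 2 * ρ) +
        8 * α * C ^ δ / ((α - 1) * (δ * (1 - δ) * r ^ δ)) := by
        rw [hsρ, hRs, hs]
        field_simp
        ring
    _ ≤ 8 * C * (3 * α + 1) / ((α - 1) ^ 2 * (δ * (1 - δ) * r ^ δ)) +
        8 * α * C ^ δ / ((α - 1) * (δ * (1 - δ) * r ^ δ)) := by
      gcongr
      norm_num
    _ = _ := by
      field_simp

end ShiftBound

/-- **Key lemma.** Let `f` be meromorphic on ℂ with `f(0) ≠ 0, ∞` and let `c ∈ ℂ`.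
Then for all `α > 1`, `0 < δ < 1` and `r ≥ 1`,
`m(r, f(z+c)/f(z)) ≤ (8|c|(3α+1) + 8α(α−1)|c|^δ) / (δ(1−δ)(α−1)² r^δ)
  · (T(α(r+|c|), f) + log⁺(1/|f(0)|))`. -/
theorem proximity_shift_quotient_bound (f : ℂ → ℂ) (hf : MeromorphicOn f Set.univ)
    (h0 : AnalyticAt ℂ f 0) (hf0 : f 0 ≠ 0) (c : ℂ) (α δ r : ℝ)
    (hα : 1 < α) (hδ0 : 0 < δ) (hδ1 : δ < 1) (hr : 1 ≤ r) :
    nevm (fun z => f (z + c) / f z) r ≤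
      (8 * ‖c‖ * (3 * α + 1) + 8 * α * (α - 1) * ‖c‖ ^ δ) /
          (δ * (1 - δ) * (α - 1) ^ 2 * r ^ δ) *
        (nevT f (α * (r + ‖c‖)) + logPlus (1 / ‖f 0‖)) := by
  have hf : Meromorphic f := fun z ↦ hf z (Set.mem_univ z)
  have hrρ : r ≤ r + ‖c‖ := le_add_of_nonneg_right (norm_nonneg c)
  have hρ : 0 < r + ‖c‖ := (one_pos.trans_le hr).trans_le hrρ
  set s := (α + 1) / 2 * (r + ‖c‖) with hs
  have hρs : r + ‖c‖ < s := by nlinarith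
  have hsR : s < α * (r + ‖c‖) := by nlinarith
  have hlogPlus : logPlus (1 / ‖f 0‖) = Real.posLog ‖f 0‖⁻¹ := by
    rw [logPlus, max_comm, one_div, Real.posLog]
  have hK : 0 ≤ ValueDistribution.characteristic f ⊤ (α * (r + ‖c‖)) + Real.posLog ‖f 0‖⁻¹ :=
    add_nonneg (ValueDistribution.characteristic_nonneg
      (hr.trans (hrρ.trans (hρs.trans hsR).le))) Real.posLog_nonneg
  rw [nevm_eq_proximity, nevT_eq_characteristic hf (hρ.trans (hρs.trans hsR)).le, hlogPlus]
  refine (proximity_shift_div_le hf h0 hf0 hδ0 hδ1 hr hρs hsR).trans ?_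
  gcongr
  exact shift_coeff_le hα hδ0 hδ1 hr hrρ (norm_nonneg c) hs
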